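/- arXiv:1009.5472 — 7 statements merged into one kernel-verified Lean document; each statement's English description precedes it below -/
import Mathlib

section
/- For every n ≥ 1 with M_n invertible, and every i with 0 ≤ i ≤ n−1, the pairing ⟨x^i, q_n(y)⟩ vanishes; explicitly, I i n − r_i ⬝ M_n⁻¹ ⬝ w_n = 0, where r_i is the row vector (I i 0, …, I i (n−1)) and w_n is the column vector with entries (w_n)_k = I (n−1−k) n for 0 ≤ k ≤ n−1. -/
/-- For `n ≥ 1` with the bimoment matrix `M_n` (entries `(M_n)_{k,j} = I (n-1-k) j`)
invertible (with two-sided inverse `N`), and `0 ≤ i ≤ n-1`, the pairing `⟨x^i, q_n(y)⟩`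
vanishes: `I i n - r_i ⬝ M_n⁻¹ ⬝ w_n = 0`, where `r_i = (I i 0, …, I i (n-1))` and
`(w_n)_k = I (n-1-k) n`. -/
theorem pairing_xi_qn_eq_zero {R : Type*} [DivisionRing R] (I : ℕ → ℕ → R)
    (n : ℕ) (hn : 1 ≤ n)
    (M N : Matrix (Fin n) (Fin n) R)
    (hM : ∀ k j : Fin n, M k j = I (n - 1 - (k : ℕ)) (j : ℕ))
    (hMN : M * N = 1) (hNM : N * M = 1)
    (i : ℕ) (hi : i ≤ n - 1) :
    I i n - ∑ k : Fin n, ∑ j : Fin n, I i (k : ℕ) * N k j * I (n - 1 - (j : ℕ)) n = 0 := by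
  -- The row `r_i` is the row of `M` with index `p = n - 1 - i`, so `r_i M⁻¹` is the `p`-th unit row.
  obtain ⟨p, hp⟩ : ∃ p : Fin n, n - 1 - (p : ℕ) = i :=
    ⟨⟨n - 1 - i, by omega⟩, by simp only; omega⟩
  have hrow (j : Fin n) : ∑ k : Fin n, I i (k : ℕ) * N k j = (1 : Matrix (Fin n) (Fin n) R) p j := by
    rw [← hMN, Matrix.mul_apply]
    simp only [hM, hp]
  rw [Finset.sum_comm]
  simp only [← Finset.sum_mul, hrow, Matrix.one_apply, ite_mul, one_mul, zero_mul,
    Finset.sum_ite_eq, Finset.mem_univ, if_true, hp, sub_self]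
end

section
/- For all n, m ∈ ℕ with n ≠ m, if M_n and M_m are invertible (vacuous when the index is 0), then ⟨p_n(x), q_m(y)⟩ = 0; explicitly, writing p_n(x) = ∑_{i=0}^{n} c_i x^i and q_m(y) = ∑_{j=0}^{m} y^j d_j for the coefficient sequences of the quasideterminant polynomials, one has ∑_{i=0}^{n} ∑_{j=0}^{m} c_i · I i j · d_j = 0. In other words, {p_n}, {q_m} is a monic biorthogonal system with respect to the bimoments I. -/
/-!
The equation `t M_n = u_n` says that `p_n` pairs to zero with each monomial `y^j`, `j < n`;
dually, `M_m s = w_m` says that `q_m` pairs to zero with each monomial `x^i`, `i < m`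
(`left_orthogonal`, `right_orthogonal`). If `m < n`, then `q_m` is a combination of the `y^j`
with `j ≤ m < n`, so the pairing vanishes by the first fact; if `n < m`, the second applies.
-/

/-- The left polynomial `p_n` is orthogonal to `y^j` for `j < n`: its coefficients solve `t M_n = u_n`.
The coefficient `t_k` with `k = n - 1 - i` belongs to `x^i`, hence the index `i.rev`. -/
theorem left_orthogonal {R : Type*} [DivisionRing R] (I : ℕ → ℕ → R) (n : ℕ)
    (M N : Matrix (Fin n) (Fin n) R)
    (hM : ∀ k j : Fin n, M k j = I (n - 1 - (k : ℕ)) (j : ℕ))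
    (hNM : N * M = 1) (c : ℕ → R) (hc1 : c n = 1)
    (hc3 : ∀ i : Fin n, c (i : ℕ) =
      -(∑ j : Fin n, I n (j : ℕ) * N j i.rev))
    (j : Fin n) :
    ∑ i ∈ Finset.range (n + 1), c i * I i j = 0 := by
  have hu : Matrix.vecMul (Matrix.vecMul (fun l : Fin n => I n l) N) M j = I n j := by
    rw [Matrix.vecMul_vecMul, hNM, Matrix.vecMul_one]
  -- Row `k` of `M` holds the moments of `x^(n-1-k)`, so the sum over degrees is reversed.
  have hs : ∑ i : Fin n, c i * I i j
      = -Matrix.vecMul (Matrix.vecMul (fun l : Fin n => I n l) N) M j := by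
    rw [← Equiv.sum_comp Fin.revPerm]
    simp only [Matrix.vecMul, dotProduct]
    rw [← Finset.sum_neg_distrib]
    refine Finset.sum_congr rfl fun k _ => ?_
    have hv : ((Fin.revPerm k : Fin n) : ℕ) = n - 1 - (k : ℕ) := by
      simp only [Fin.revPerm_apply, Fin.val_rev]
      omega
    rw [hc3, hv, hM, neg_mul, Fin.revPerm_apply, Fin.rev_rev]
  rw [Finset.sum_range_succ, Finset.sum_range (fun i => c i * I i j), hs, hu, hc1]
  simp

/-- The right polynomial `q_m` is orthogonal to `x^i` for `i < m`: its coefficients solve `M_m s = w_m`. -/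
theorem right_orthogonal {R : Type*} [DivisionRing R] (I : ℕ → ℕ → R) (m : ℕ)
    (M N : Matrix (Fin m) (Fin m) R)
    (hM : ∀ k j : Fin m, M k j = I (m - 1 - (k : ℕ)) (j : ℕ))
    (hMN : M * N = 1) (d : ℕ → R) (hd1 : d m = 1)
    (hd3 : ∀ j : Fin m, d (j : ℕ) =
      -(∑ k : Fin m, N j k * I (m - 1 - (k : ℕ)) m))
    (i : ℕ) (hi : i < m) :
    ∑ j ∈ Finset.range (m + 1), I i j * d j = 0 := by
  -- The moments of `x^i` form row `m - 1 - i` of `M`.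
  obtain ⟨k, rfl⟩ : ∃ k : Fin m, i = m - 1 - (k : ℕ) :=
    ⟨⟨m - 1 - i, by omega⟩, by simp only; omega⟩
  have hw : Matrix.mulVec M (Matrix.mulVec N (fun l : Fin m => I (m - 1 - (l : ℕ)) m)) k
      = I (m - 1 - (k : ℕ)) m := by
    rw [Matrix.mulVec_mulVec, hMN, Matrix.one_mulVec]
  have hs : ∑ j : Fin m, I (m - 1 - (k : ℕ)) j * d j
      = -Matrix.mulVec M (Matrix.mulVec N (fun l : Fin m => I (m - 1 - (l : ℕ)) m)) k := by
    simp only [Matrix.mulVec, dotProduct]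
    rw [← Finset.sum_neg_distrib]
    refine Finset.sum_congr rfl fun j _ => ?_
    rw [hd3, hM, mul_neg]
  rw [Finset.sum_range_succ, Finset.sum_range (fun j => I (m - 1 - (k : ℕ)) j * d j), hs, hw, hd1]
  simp

/-- For `n ≠ m`, with the bimoment matrices `M_n`, `M_m` invertible (vacuous when
the index is 0), the quasideterminant polynomials `p_n` and `q_m` pair to zero:
`∑_{i=0}^{n} ∑_{j=0}^{m} c_i * I i j * d_j = 0`, where `c` is the coefficient sequence of
`p_n(x) = x^n - ∑_{k=0}^{n-1} t_k x^{n-1-k}` with `t = u_n M_n⁻¹`, and `d` is the coefficient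
sequence of `q_m(y) = y^m - ∑_{j=0}^{m-1} y^j s_j` with `s = M_m⁻¹ w_m` (with `p_0 = q_0 = 1`).
That is, `{p_n}, {q_m}` is a monic biorthogonal system with respect to the bimoments `I`. -/
theorem biorthogonal_system {R : Type*} [DivisionRing R] (I : ℕ → ℕ → R)
    (n m : ℕ) (hnm : n ≠ m)
    (Mn Nn : Matrix (Fin n) (Fin n) R)
    (hMn : ∀ k j : Fin n, Mn k j = I (n - 1 - (k : ℕ)) (j : ℕ))
    (hMNn : Mn * Nn = 1) (hNMn : Nn * Mn = 1)
    (Mm Nm : Matrix (Fin m) (Fin m) R)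
    (hMm : ∀ k j : Fin m, Mm k j = I (m - 1 - (k : ℕ)) (j : ℕ))
    (hMNm : Mm * Nm = 1) (hNMm : Nm * Mm = 1)
    (c d : ℕ → R)
    (hc1 : c n = 1) (hc2 : ∀ i, n < i → c i = 0)
    (hc3 : ∀ i : Fin n, c (i : ℕ) =
      -(∑ j : Fin n, I n (j : ℕ) * Nn j ⟨n - 1 - (i : ℕ), by have := i.isLt; omega⟩))
    (hd1 : d m = 1) (hd2 : ∀ j, m < j → d j = 0)
    (hd3 : ∀ j : Fin m, d (j : ℕ) =
      -(∑ k : Fin m, Nm j k * I (m - 1 - (k : ℕ)) m)) :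
    ∑ i ∈ Finset.range (n + 1), ∑ j ∈ Finset.range (m + 1), c i * I i j * d j = 0 := by
  rcases lt_or_gt_of_ne hnm with h | h
  · refine Finset.sum_eq_zero fun i hi => ?_
    have hi' : i < m := by
      have := Finset.mem_range.mp hi
      omega
    simp only [mul_assoc]
    rw [← Finset.mul_sum, right_orthogonal I m Mm Nm hMm hMNm d hd1 hd3 i hi', mul_zero]
  · rw [Finset.sum_comm]
    refine Finset.sum_eq_zero fun j hj => ?_
    have hj' : j < n := by
      have := Finset.mem_range.mp hj
      omega
    have hc (i : Fin n) : c i = -∑ j : Fin n, I n j * Nn j i.rev := by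
      rw [hc3 i]
      congr! 4
      ext
      simp only [Fin.val_rev]
      omega
    rw [← Finset.sum_mul, left_orthogonal I n Mn Nn hMn hNMn c hc1 hc ⟨j, hj'⟩, zero_mul]
end

section
/- For every n ≥ 1 with M_n invertible, the pairing of the monic quasideterminant polynomials satisfies ⟨p_n(x), q_n(y)⟩ = Δ_n, where Δ_n = I n n − u_n ⬝ M_n⁻¹ ⬝ w_n is the (1,n+1)-quasideterminant of the (n+1)×(n+1) bimoment matrix with entries I (n−k) j (0 ≤ k, j ≤ n). Consequently, if Δ_n ≠ 0 then the rescaled polynomials p̃_n = Δ_n⁻¹ · p_n and q_n satisfy ⟨p̃_n, q_n⟩ = 1, i.e. the system is biorthonormal. -/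
/-!
Summing over `j` first pairs the monomial `x ^ i` with `q_n`. Since `s = M⁻¹ w`, the identity
`M (M⁻¹ w) = w` says that this pairing vanishes for every `i < n`
(the row `k = n - 1 - i` of `M` holds the bimoments `I i j`). As `p_n` is monic of degree `n`,
only `i = n` survives in `⟨p_n, q_n⟩`, and it contributes `I n n - u M⁻¹ w = Δ`.
The normalised statement follows by pulling `Δ⁻¹` out of the sum on the left.
-/

/-- For `n ≥ 1` with `M_n` invertible, the pairing of the monic quasideterminant
polynomials satisfies `⟨p_n, q_n⟩ = Δ_n` where
`Δ_n = I n n - u_n ⬝ M_n⁻¹ ⬝ w_n` is the `(1,n+1)`-quasideterminant of the bordered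
bimoment matrix.  Consequently, if `Δ_n ≠ 0` then the rescaled polynomial
`p̃_n = Δ_n⁻¹ · p_n` (coefficients `Δ_n⁻¹ * c i`) satisfies `⟨p̃_n, q_n⟩ = 1`. -/
theorem pairing_pn_qn_eq_quasideterminant {R : Type*} [DivisionRing R] (I : ℕ → ℕ → R)
    (n : ℕ) (hn : 1 ≤ n)
    (M N : Matrix (Fin n) (Fin n) R)
    (hM : ∀ k j : Fin n, M k j = I (n - 1 - (k : ℕ)) (j : ℕ))
    (hMN : M * N = 1) (hNM : N * M = 1)
    (c d : ℕ → R)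
    (hc1 : c n = 1) (hc2 : ∀ i, n < i → c i = 0)
    (hc3 : ∀ i : Fin n, c (i : ℕ) =
      -(∑ j : Fin n, I n (j : ℕ) * N j ⟨n - 1 - (i : ℕ), by have := i.isLt; omega⟩))
    (hd1 : d n = 1) (hd2 : ∀ j, n < j → d j = 0)
    (hd3 : ∀ j : Fin n, d (j : ℕ) =
      -(∑ k : Fin n, N j k * I (n - 1 - (k : ℕ)) n))
    (Δ : R)
    (hΔ : Δ = I n n - ∑ k : Fin n, ∑ j : Fin n, I n (k : ℕ) * N k j * I (n - 1 - (j : ℕ)) n) :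
    (∑ i ∈ Finset.range (n + 1), ∑ j ∈ Finset.range (n + 1), c i * I i j * d j = Δ) ∧
      (Δ ≠ 0 →
        ∑ i ∈ Finset.range (n + 1), ∑ j ∈ Finset.range (n + 1),
          (Δ⁻¹ * c i) * I i j * d j = 1) := by
  -- The monomial `x ^ i` is orthogonal to `q_n` for `i < n`.
  have orth : ∀ i < n, ∑ j ∈ Finset.range (n + 1), I i j * d j = 0 := by
    intro i hi
    let k : Fin n := ⟨n - 1 - i, by omega⟩
    have hk : n - 1 - (k : ℕ) = i := by simp only [k]; omega
    let w : Fin n → R := fun l => I (n - 1 - (l : ℕ)) n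
    have hw : M.mulVec (N.mulVec w) k = w k := by
      rw [Matrix.mulVec_mulVec, hMN, Matrix.one_mulVec]
    have hsum : ∑ j : Fin n, I i j * d j = -M.mulVec (N.mulVec w) k := by
      simp only [Matrix.mulVec, dotProduct, hM, hk, hd3, w, mul_neg, Finset.sum_neg_distrib]
    rw [Finset.sum_range_succ, Finset.sum_range (fun j => I i j * d j), hsum, hw, hd1]
    simp only [w, hk, mul_one, neg_add_cancel]
  have top : ∑ j ∈ Finset.range (n + 1), I n j * d j = Δ := by
    rw [Finset.sum_range_succ, Finset.sum_range (fun j => I n j * d j), hd1, hΔ]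
    simp only [hd3, mul_neg, Finset.sum_neg_distrib, Finset.mul_sum, mul_assoc, mul_one]
    rw [neg_add_eq_sub]
  have main : ∑ i ∈ Finset.range (n + 1), ∑ j ∈ Finset.range (n + 1), c i * I i j * d j = Δ := by
    simp only [mul_assoc, ← Finset.mul_sum]
    rw [Finset.sum_range_succ, top, hc1, one_mul, Finset.sum_eq_zero, zero_add]
    intro i hi
    rw [orth i (Finset.mem_range.mp hi), mul_zero]
  refine ⟨main, fun hne => ?_⟩
  rw [← inv_mul_cancel₀ hne]
  nth_rewrite 3 [← main]
  simp only [Finset.mul_sum, mul_assoc]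
end

section
/- Suppose the bimoments satisfy ∑_{i=0}^{n} a_i · I (r+i) s + ∑_{j=0}^{m} I r (s+j) · b_j = α_r · β_s for all r, s ∈ ℕ, where a_0,…,a_n and b_0,…,b_m lie in the center of R and α, β : ℕ → R. For finitely supported coefficient sequences c, d : ℕ → R (representing a left polynomial p(x) = ∑_i c_i x^i and a right polynomial q(y) = ∑_j y^j d_j), set π = ∑_i c_i α_i and η = ∑_j β_j d_j. Then ⟨p·f, q⟩ + ⟨p, g·q⟩ = π · η, where f(x) = ∑_{i=0}^n a_i x^i and g(y) = ∑_{j=0}^m y^j b_j; explicitly, ∑_{s,j} (∑_t c_t a_{s−t}) · I s j · d_j + ∑_{i,s} c_i · I i s · (∑_t b_t d_{s−t}) = π · η. -/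
/-!
Each double sum `∑ c_r · I · d_s` is additive in the coefficients of either polynomial, so
expanding the coefficients of `p * f` and `g * q` as convolutions
(`sum_mul_eq_sum_sum`) gives
`⟨p f, q⟩ = ∑_{r,s} c_r (∑_i a_i I (r+i) s) d_s` and
`⟨p, g q⟩ = ∑_{r,s} c_r (∑_j I r (s+j) b_j) d_s`.
Adding the two and applying the moment relation leaves `∑_{r,s} c_r α_r β_s d_s`, which factors.
The products `c_r a_i` and `b_j d_s` already occur in the order needed, so nothing has to be
commuted.
-/

/-- The pairing of a left polynomial `p(x) = ∑ aᵢ xⁱ` with a right polynomial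
`q(y) = ∑ yʲ bⱼ` relative to bimoments `I`: `⟨p, q⟩ = ∑_{i,j} aᵢ · I i j · bⱼ`.
(Left and right polynomials are both recorded by their coefficient sequences,
as elements of `Polynomial R`.) -/
noncomputable def bimomentPairing {R : Type*} [DivisionRing R] (I : ℕ → ℕ → R)
    (p q : Polynomial R) : R :=
  ∑ i ∈ p.support, ∑ j ∈ q.support, p.coeff i * I i j * q.coeff j

/-- Additive functionals turn the coefficients of a product into a double sum over the
coefficients of the factors. -/
lemma sum_mul_eq_sum_sum {R S : Type*} [Semiring R] [AddCommMonoid S] (F : ℕ → R →+ S)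
    (p q : Polynomial R) :
    ∑ i ∈ (p * q).support, F i ((p * q).coeff i)
      = ∑ i ∈ p.support, ∑ j ∈ q.support, F (i + j) (p.coeff i * q.coeff j) := by
  let L : Polynomial R →+ S :=
    { toFun := fun u => u.sum fun i a => F i a
      map_zero' := Polynomial.sum_zero_index _
      map_add' := fun u v => Polynomial.sum_add_index u v _ (fun i => map_zero (F i))
        (fun i a b => map_add (F i) a b) }
  have hmon : ∀ i a, L (Polynomial.monomial i a) = F i a := fun i a =>
    Polynomial.sum_monomial_index a _ (map_zero (F i))
  change L (p * q) = _
  rw [Polynomial.mul_eq_sum_sum]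
  simp only [Polynomial.sum_def, map_sum, hmon]

/-- A summand vanishing where the coefficient does may be summed over any initial segment
containing the support. -/
lemma sum_support_eq_sum_range {R S : Type*} [Semiring R] [AddCommMonoid S] (f : Polynomial R)
    (n : ℕ) (hf : ∀ i, n < i → f.coeff i = 0) (G : ℕ → S)
    (hG : ∀ i, f.coeff i = 0 → G i = 0) :
    ∑ i ∈ f.support, G i = ∑ i ∈ Finset.range (n + 1), G i := by
  refine Finset.sum_subset (fun i hi => ?_) fun i _ hi => hG i (by simpa using hi)
  by_contra h
  exact Polynomial.mem_support_iff.1 hi (hf i (by simpa using h))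

/-- if the bimoments satisfy
`∑_{i=0}^n aᵢ · I (r+i) s + ∑_{j=0}^m I r (s+j) · bⱼ = α_r · β_s` for central `aᵢ, bⱼ`,
then for any left polynomial `p` and right polynomial `q`,
`⟨p·f, q⟩ + ⟨p, g·q⟩ = π · η`, where `f(x) = ∑_{i=0}^n aᵢ xⁱ`, `g(y) = ∑_{j=0}^m yʲ bⱼ`,
`π = ∑ᵢ cᵢ αᵢ` and `η = ∑ⱼ βⱼ dⱼ` (`c`, `d` the coefficient sequences of `p`, `q`). -/
theorem pairing_cauchy_like_kernel {R : Type*} [DivisionRing R] (I : ℕ → ℕ → R)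
    (n m : ℕ) (f g : Polynomial R)
    (hfC : ∀ i, f.coeff i ∈ Set.center R) (hfn : ∀ i, n < i → f.coeff i = 0)
    (hgC : ∀ j, g.coeff j ∈ Set.center R) (hgm : ∀ j, m < j → g.coeff j = 0)
    (α β : ℕ → R)
    (hmom : ∀ r s : ℕ,
      (∑ i ∈ Finset.range (n + 1), f.coeff i * I (r + i) s)
        + (∑ j ∈ Finset.range (m + 1), I r (s + j) * g.coeff j) = α r * β s)
    (p q : Polynomial R) :
    bimomentPairing I (p * f) q + bimomentPairing I p (g * q)
      = (∑ i ∈ p.support, p.coeff i * α i) * (∑ j ∈ q.support, β j * q.coeff j) := by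
  have hleft : bimomentPairing I (p * f) q = ∑ r ∈ p.support, ∑ s ∈ q.support,
      p.coeff r * (∑ i ∈ Finset.range (n + 1), f.coeff i * I (r + i) s) * q.coeff s := by
    have h := sum_mul_eq_sum_sum (fun i => ∑ s ∈ q.support,
      (AddMonoidHom.mulRight (q.coeff s)).comp (AddMonoidHom.mulRight (I i s))) p f
    simp only [AddMonoidHom.finsetSum_apply, AddMonoidHom.comp_apply,
      AddMonoidHom.mulRight_apply] at h
    rw [bimomentPairing, h]
    refine Finset.sum_congr rfl fun r _ => ?_
    rw [Finset.sum_comm]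
    refine Finset.sum_congr rfl fun s _ => ?_
    rw [sum_support_eq_sum_range f n hfn _ (fun i hi => by simp [hi])]
    simp only [Finset.mul_sum, Finset.sum_mul, mul_assoc]
  have hright : bimomentPairing I p (g * q) = ∑ r ∈ p.support, ∑ s ∈ q.support,
      p.coeff r * (∑ j ∈ Finset.range (m + 1), I r (s + j) * g.coeff j) * q.coeff s := by
    rw [bimomentPairing]
    refine Finset.sum_congr rfl fun r _ => ?_
    have h := sum_mul_eq_sum_sum (fun j => AddMonoidHom.mulLeft (p.coeff r * I r j)) g q
    simp only [AddMonoidHom.coe_mulLeft] at h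
    rw [h, Finset.sum_comm]
    refine Finset.sum_congr rfl fun s _ => ?_
    rw [sum_support_eq_sum_range g m hgm _ (fun i hi => by simp [hi])]
    simp only [Finset.mul_sum, Finset.sum_mul, mul_assoc, add_comm s]
  rw [hleft, hright, Finset.sum_mul_sum]
  simp only [← Finset.sum_add_distrib, ← add_mul, ← mul_add, hmom, mul_assoc]
end

section
/- Let {p_k} be left polynomials over a division ring R with p_k of degree exactly k, {q_l} right polynomials, and I : ℕ → ℕ → R bimoments with ⟨p_k, q_l⟩ = 0 for k ≠ l. Let f(x) = ∑_{i=0}^{n} a_i x^i with all a_i in the center of R. Then the infinite matrix X with entries X_{i,j} = ⟨p_i · f, q_j⟩ satisfies X_{i,j} = 0 whenever j > i + n; that is, X lies in the band (−∞, n]. -/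
/-- For fixed `q`, the pairing `g ↦ ⟨g, q⟩` as a left `R`-linear functional. -/
noncomputable def pairingLeft {R : Type*} [DivisionRing R] (I : ℕ → ℕ → R)
    (q : Polynomial R) : Polynomial R →ₗ[R] R :=
  Polynomial.lsum fun i =>
    LinearMap.toSpanSingleton R R (∑ j ∈ q.support, I i j * q.coeff j)

theorem bimomentPairing_eq_pairingLeft {R : Type*} [DivisionRing R] (I : ℕ → ℕ → R)
    (g q : Polynomial R) : bimomentPairing I g q = pairingLeft I q g := by
  simp [bimomentPairing, pairingLeft, Polynomial.lsum_apply, Polynomial.sum_def,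
    Finset.mul_sum, mul_assoc]

/-- A polynomial of degree `< d ≤ j` pairs to zero with `q j`: its leading term is cancelled by a
left multiple of `p (d - 1)`, and the remainder is handled by induction on `d`. -/
theorem bimomentPairing_eq_zero_of_coeff {R : Type*} [DivisionRing R] (I : ℕ → ℕ → R)
    (p q : ℕ → Polynomial R)
    (hp : ∀ k, (p k).coeff k ≠ 0 ∧ ∀ i, k < i → (p k).coeff i = 0)
    (horth : ∀ k l, k ≠ l → bimomentPairing I (p k) (q l) = 0) (j d : ℕ) (hd : d ≤ j)
    (g : Polynomial R) (hg : ∀ i, d ≤ i → g.coeff i = 0) :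
    bimomentPairing I g (q j) = 0 := by
  induction d generalizing g with
  | zero =>
    have : g = 0 := by
      ext i
      simpa using hg i (Nat.zero_le i)
    simp [this, bimomentPairing]
  | succ d ih =>
    have hrem := ih (by omega) (g - (g.coeff d * ((p d).coeff d)⁻¹) • p d) (by
      intro i hi
      rcases hi.eq_or_lt with rfl | hi
      · simp [mul_assoc, inv_mul_cancel₀ (hp d).1]
      · simp [hg i hi, (hp d).2 i hi])
    have hpd := horth d j (by omega)
    rw [bimomentPairing_eq_pairingLeft] at hrem hpd ⊢
    simpa [hpd] using hrem

/-- if `p k` has degree exactly `k`, `⟨p k, q l⟩ = 0` for `k ≠ l`, and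
`f(x) = ∑_{i=0}^n aᵢ xⁱ` has central coefficients, then the matrix
`X i j = ⟨p i · f, q j⟩` vanishes whenever `j > i + n`, i.e. `X` lies in the band `(-∞, n]`. -/
theorem pairing_mulRight_banded {R : Type*} [DivisionRing R] (I : ℕ → ℕ → R)
    (p q : ℕ → Polynomial R)
    (hp : ∀ k, (p k).coeff k ≠ 0 ∧ ∀ i, k < i → (p k).coeff i = 0)
    (horth : ∀ k l, k ≠ l → bimomentPairing I (p k) (q l) = 0)
    (n : ℕ) (f : Polynomial R)
    (hfC : ∀ i, f.coeff i ∈ Set.center R) (hfn : ∀ i, n < i → f.coeff i = 0) :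
    ∀ i j : ℕ, i + n < j → bimomentPairing I (p i * f) (q j) = 0 := by
  intro i j hij
  refine bimomentPairing_eq_zero_of_coeff I p q hp horth j j le_rfl _ fun s hs => ?_
  rw [Polynomial.coeff_mul]
  refine Finset.sum_eq_zero fun x hx => ?_
  have hx' := Finset.HasAntidiagonal.mem_antidiagonal.mp hx
  -- `x.1 + x.2 = s > i + n` forces `x.1 > i` or `x.2 > n`.
  by_cases h : i < x.1
  · rw [(hp i).2 _ h, zero_mul]
  · rw [hfn x.2 (by omega), mul_zero]
end

section
/- Let {p_k} be left polynomials over a division ring R, {q_l} right polynomials with q_l of degree exactly l, and I : ℕ → ℕ → R bimoments with ⟨p_k, q_l⟩ = 0 for k ≠ l. Let g(y) = ∑_{j=0}^{m} y^j b_j with all b_j in the center of R. Then the infinite matrix Z with entries Z_{i,j} = ⟨p_i, g · q_j⟩ satisfies Z_{i,j} = 0 whenever i > j + m; that is, Z lies in the band [−m, ∞). -/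
/-- The inner sum may run over any range containing the support of `r`. -/
lemma bimomentPairing_eq_sum_range {R : Type*} [DivisionRing R] (I : ℕ → ℕ → R)
    (p r : Polynomial R) (N : ℕ) (hr : ∀ j, N ≤ j → r.coeff j = 0) :
    bimomentPairing I p r =
      ∑ i ∈ p.support, ∑ j ∈ Finset.range N, p.coeff i * I i j * r.coeff j := by
  unfold bimomentPairing
  refine Finset.sum_congr rfl fun i _ => Finset.sum_subset ?_ ?_
  · intro j hj
    rw [Finset.mem_range]
    by_contra h
    exact Polynomial.mem_support_iff.mp hj (hr j (not_lt.mp h))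
  · intro j _ hj
    rw [Polynomial.notMem_support_iff.mp hj, mul_zero]

lemma bimomentPairing_add_mul_C {R : Type*} [DivisionRing R] (I : ℕ → ℕ → R)
    (p r s : Polynomial R) (c : R) :
    bimomentPairing I p (r + s * Polynomial.C c) =
      bimomentPairing I p r + bimomentPairing I p s * c := by
  -- a common range for the three inner sums
  set N := max r.natDegree s.natDegree + 1 with hN
  have hr : ∀ j, N ≤ j → r.coeff j = 0 := fun j hj =>
    Polynomial.coeff_eq_zero_of_natDegree_lt (by omega)
  have hs : ∀ j, N ≤ j → s.coeff j = 0 := fun j hj =>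
    Polynomial.coeff_eq_zero_of_natDegree_lt (by omega)
  rw [bimomentPairing_eq_sum_range I p r N hr, bimomentPairing_eq_sum_range I p s N hs,
    bimomentPairing_eq_sum_range I p (r + s * Polynomial.C c) N
      (fun j hj => by simp [hr j hj, hs j hj])]
  simp only [Finset.sum_mul, ← Finset.sum_add_distrib, Polynomial.coeff_add,
    Polynomial.coeff_mul_C, mul_add, mul_assoc]

/-- A polynomial orthogonal to `q 0, …, q (n - 1)`, where `q l` has degree exactly `l`, is
orthogonal to every polynomial of degree less than `n`. -/
lemma bimomentPairing_eq_zero_of_low_degree {R : Type*} [DivisionRing R] (I : ℕ → ℕ → R)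
    (p : Polynomial R) (q : ℕ → Polynomial R)
    (hq : ∀ l, (q l).coeff l ≠ 0 ∧ ∀ j, l < j → (q l).coeff j = 0) (n : ℕ)
    (horth : ∀ l, l < n → bimomentPairing I p (q l) = 0)
    (r : Polynomial R) (hr : ∀ j, n ≤ j → r.coeff j = 0) :
    bimomentPairing I p r = 0 := by
  induction n generalizing r with
  | zero => simp [bimomentPairing_eq_sum_range I p r 0 hr]
  | succ n ih =>
    -- cancel the coefficient of degree `n` by a right multiple of `q n`
    have key := ih (fun l hl => horth l (by omega))
      (r + q n * Polynomial.C (-(((q n).coeff n)⁻¹ * r.coeff n))) (by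
        intro j hj
        rw [Polynomial.coeff_add, Polynomial.coeff_mul_C]
        rcases hj.eq_or_lt with rfl | h
        · rw [mul_neg, mul_inv_cancel_left₀ (hq n).1, add_neg_cancel]
        · rw [hr j h, (hq n).2 j h, zero_mul, add_zero])
    rwa [bimomentPairing_add_mul_C, horth n (Nat.lt_succ_self n), zero_mul, add_zero] at key

/-- if `q l` has degree exactly `l`, `⟨p k, q l⟩ = 0` for `k ≠ l`, and
`g(y) = ∑_{j=0}^m yʲ bⱼ` has central coefficients, then the matrix
`Z i j = ⟨p i, g · q j⟩` vanishes whenever `i > j + m`, i.e. `Z` lies in the band `[-m, ∞)`. -/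
theorem pairing_mulLeft_banded {R : Type*} [DivisionRing R] (I : ℕ → ℕ → R)
    (p q : ℕ → Polynomial R)
    (hq : ∀ l, (q l).coeff l ≠ 0 ∧ ∀ j, l < j → (q l).coeff j = 0)
    (horth : ∀ k l, k ≠ l → bimomentPairing I (p k) (q l) = 0)
    (m : ℕ) (g : Polynomial R)
    (hgC : ∀ j, g.coeff j ∈ Set.center R) (hgm : ∀ j, m < j → g.coeff j = 0) :
    ∀ i j : ℕ, j + m < i → bimomentPairing I (p i) (g * q j) = 0 := by
  intro i j hij
  refine bimomentPairing_eq_zero_of_low_degree I (p i) q hq i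
    (fun l hl => horth i l (by omega)) _ fun k hk => ?_
  have hg : g.natDegree ≤ m := Polynomial.natDegree_le_iff_coeff_eq_zero.mpr hgm
  have hqj : (q j).natDegree ≤ j := Polynomial.natDegree_le_iff_coeff_eq_zero.mpr (hq j).2
  have hmul : (g * q j).natDegree ≤ g.natDegree + (q j).natDegree := Polynomial.natDegree_mul_le
  exact Polynomial.coeff_eq_zero_of_natDegree_lt (by omega)
end

section
/- Let R be a division ring, n, m ∈ ℕ, π, η : ℕ → R with every π_k ≠ 0, and let X, Z : ℕ → ℕ → R be infinite matrices such that X_{k,l} = 0 whenever l > k + n, Z_{k,l} = 0 whenever k > l + m, and X_{k,l} + Z_{k,l} = π_k · η_l for all k, l. Define A_{k,l} = π_{k+1}⁻¹ · X_{k+1,l} − π_k⁻¹ · X_{k,l}. Then A_{k,l} = 0 unless −m ≤ (l : ℤ) − k ≤ n + 1; that is, A lies in the band [−m, n+1]. -/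
/-- if `X` vanishes when `l > k + n`, `Z` vanishes when `k > l + m`, and
`X k l + Z k l = π k * η l` with every `π k ≠ 0`, then the matrix
`A k l = (π (k+1))⁻¹ * X (k+1) l - (π k)⁻¹ * X k l` (the entrywise form of
`(Λ - Id) · D_π⁻¹ · X`) lies in the band `[-m, n+1]`. -/
theorem A_banded {R : Type*} [DivisionRing R] (n m : ℕ) (π η : ℕ → R)
    (hπ : ∀ k, π k ≠ 0)
    (X Z : ℕ → ℕ → R)
    (hX : ∀ k l : ℕ, k + n < l → X k l = 0)
    (hZ : ∀ k l : ℕ, l + m < k → Z k l = 0)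
    (hXZ : ∀ k l : ℕ, X k l + Z k l = π k * η l) :
    ∀ k l : ℕ, (π (k + 1))⁻¹ * X (k + 1) l - (π k)⁻¹ * X k l ≠ 0 →
      -(m : ℤ) ≤ (l : ℤ) - k ∧ (l : ℤ) - k ≤ (n : ℤ) + 1 := by
  intro k l hA
  constructor
  · by_contra h
    -- Below the band `Z` vanishes in rows `k` and `k + 1`, so both terms of the difference are `η l`.
    have key : ∀ j, l + m < j → (π j)⁻¹ * X j l = η l := fun j hj => by
      have hXj := hXZ j l
      rw [hZ j l hj, add_zero] at hXj
      rw [hXj, inv_mul_cancel_left₀ (hπ j)]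
    exact hA (by rw [key k (by omega), key (k + 1) (by omega), sub_self])
  · by_contra h
    -- Above the band `X` vanishes in rows `k` and `k + 1`.
    exact hA (by rw [hX k l (by omega), hX (k + 1) l (by omega), mul_zero, mul_zero, sub_self])
end
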